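/- For every (t, x) ∈ (0, +∞) × (0, +∞) there exists a unique pair (q₀, p₀) belonging to ([0, +∞) × {2}) ∪ ({0} × (0, 2]) such that F_q(t, q₀, p₀) = x and F_q(s, q₀, p₀) > 0 for all s ∈ (0, t). This defines a map Δ : (0, +∞)² → ([0, +∞) × {2}) ∪ ({0} × (0, 2]). -/

import Mathlib

open Real Set Filter MeasureTheory
open scoped Topology

/-- The potential `g` from the Hamiltonian `H(x,p) = p²/2 + g(x)`. -/
noncomputable def g (x : ℝ) : ℝ := if |x| ≤ 1 then 1 - (1 - x ^ 2) ^ 4 else 1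

/-- The derivative of `g`. -/
noncomputable def g' (x : ℝ) : ℝ := if |x| ≤ 1 then 8 * x * (1 - x ^ 2) ^ 3 else 0

/-- `(q, p)` is a (global) solution of the Hamiltonian system (HS): `q̇ = p`, `ṗ = -g'(q)`. -/
def IsHSSol (q p : ℝ → ℝ) : Prop :=
  (∀ t : ℝ, HasDerivAt q (p t) t) ∧ (∀ t : ℝ, HasDerivAt p (-(g' (q t))) t)

/-- `F` is the flow of (HS): `F t q₀ p₀ = (q t, p t)` for the solution with data `(q₀, p₀)`. -/
def IsHSFlow (F : ℝ → ℝ → ℝ → ℝ × ℝ) : Prop :=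
  ∀ q₀ p₀ : ℝ,
    IsHSSol (fun t => (F t q₀ p₀).1) (fun t => (F t q₀ p₀).2) ∧ F 0 q₀ p₀ = (q₀, p₀)

/-- The set `([0,∞) × {2}) ∪ ({0} × (0,2])`, codomain of the map `Δ`. -/
def Dset : Set (ℝ × ℝ) := (Ici (0:ℝ) ×ˢ ({2} : Set ℝ)) ∪ ({(0:ℝ)} ×ˢ Ioc (0:ℝ) 2)

/-- `T` is the smallest positive period of `q`. -/
def IsSmallestPeriod (q : ℝ → ℝ) (T : ℝ) : Prop :=
  0 < T ∧ Function.Periodic q T ∧ ∀ T' : ℝ, 0 < T' → Function.Periodic q T' → T ≤ T'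

/-- `T` is the period map `𝒯`, assigning to `p₀ ∈ (0, √2)` the smallest positive period of
the `q`-component of the solution of (HS) with initial datum `(0, p₀)`. -/
def IsPeriodMap (F : ℝ → ℝ → ℝ → ℝ × ℝ) (T : ℝ → ℝ) : Prop :=
  ∀ p₀ ∈ Ioo (0:ℝ) (Real.sqrt 2), IsSmallestPeriod (fun t => (F t 0 p₀).1) (T p₀)

/-- `Δ` associates to `(t,x)` the datum in `Dset` whose orbit stays positive on `(0,t)`
and reaches `x` at time `t`. -/
def IsDeltaMap (F : ℝ → ℝ → ℝ → ℝ × ℝ) (Δ : ℝ → ℝ → ℝ × ℝ) : Prop :=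
  ∀ t x : ℝ, 0 < t → 0 < x →
    Δ t x ∈ Dset ∧ (F t (Δ t x).1 (Δ t x).2).1 = x ∧
      ∀ s ∈ Ioo (0:ℝ) t, 0 < (F s (Δ t x).1 (Δ t x).2).1

/-- The solution `u` of the conservation law built from the flow `F` and the map `Δ`
(extended by `0` at `x = 0`). -/
noncomputable def usol (F : ℝ → ℝ → ℝ → ℝ × ℝ) (Δ : ℝ → ℝ → ℝ × ℝ) (t x : ℝ) : ℝ :=
  if 0 < x then (F t (Δ t x).1 (Δ t x).2).2
  else if x < 0 then -(F t (Δ t (-x)).1 (Δ t (-x)).2).2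
  else 0

open scoped NNReal

/-!
The data set is a curve `l ↦ (max (l - 2) 0, min l 2)`, `l > 0`, so for fixed `t` one has to invert
the scalar function `l ↦ F_q(t, l)` on the parameters whose orbit is positive on `(0, t)`.

*Uniqueness.* On positive orbits this function is strictly increasing. For two orbits leaving the
origin, let `W = q₁ p₂ - q₂ p₁`; then `W' = q₁ q₂ (g'(q₁) / q₁ - g'(q₂) / q₂)`, which is nonnegative
as long as `0 < q₁ ≤ q₂` because `g'(x) / x` decreases, so the slower orbit cannot catch up with the
faster one. If the upper orbit starts with velocity `2`, it always moves forward and has the larger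
energy, so where the two meet it is not slower than the lower one.

*Existence.* Let `m` be the largest parameter whose orbit returns to `q ≤ 0` within `(0, t]`; it is
at least `0`, the parameter of the equilibrium. By continuity the orbit of `m` is nonnegative on
`(0, t]`, and if `m > 0` then by conservation of energy it cannot touch `0` with zero velocity, so
the return happens at time `t` itself. Hence `F_q(t, m) ≤ 0`, all parameters above `m` have
positive orbits, and the intermediate value theorem applies on `[m, x + 2]`.
-/

/-! ### Real functions at the boundary of positivity -/

lemma eventually_nhdsGT_lt_of_hasDerivAt {u v : ℝ → ℝ} {u' v' a : ℝ} (hu : HasDerivAt u u' a)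
    (hv : HasDerivAt v v' a) (h : u a = v a) (h' : u' < v') : ∀ᶠ s in 𝓝[>] a, u s < v s := by
  have hd : 0 < deriv (v - u) a := by rw [(hv.sub hu).deriv]; exact sub_pos.2 h'
  have hsign := eventually_nhdsWithin_sign_eq_of_deriv_pos hd (by simp [h])
  filter_upwards [hsign.filter_mono nhdsWithin_le_nhds, self_mem_nhdsWithin] with s hs has
  rw [sign_pos (sub_pos.2 has), sign_eq_one_iff] at hs
  exact sub_pos.1 hs

lemma exists_first_nonpos {h : ℝ → ℝ} {a t : ℝ} (hc : Continuous h)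
    (hstart : ∀ᶠ s in 𝓝[>] a, 0 < h s) (hat : a < t) (ht : h t ≤ 0) :
    ∃ r ∈ Ioc a t, h r ≤ 0 ∧ ∀ s ∈ Ioo a r, 0 < h s := by
  obtain ⟨e, hae, he⟩ := mem_nhdsGT_iff_exists_Ioc_subset.1 hstart
  have het : e ≤ t := by
    by_contra! hte
    exact (he ⟨hat, hte.le⟩ : 0 < h t).not_ge ht
  have hcompact : IsCompact (Icc e t ∩ h ⁻¹' Iic 0) :=
    isCompact_Icc.inter_right (isClosed_Iic.preimage hc)
  obtain ⟨r, ⟨⟨her, hrt⟩, hr⟩, hleast⟩ := hcompact.exists_isLeast ⟨t, ⟨het, le_rfl⟩, ht⟩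
  refine ⟨r, ⟨lt_of_lt_of_le hae her, hrt⟩, hr, fun s hs => ?_⟩
  by_contra! hs0
  have hes : e ≤ s := by
    by_contra! hse
    exact (he ⟨hs.1, hse.le⟩ : 0 < h s).not_ge hs0
  exact (hleast ⟨⟨hes, hs.2.le.trans hrt⟩, hs0⟩).not_gt hs.2

lemma exists_first_crossing {u v u' v' : ℝ → ℝ} {a t : ℝ} (hu : ∀ s, HasDerivAt u (u' s) s)
    (hv : ∀ s, HasDerivAt v (v' s) s) (hstart : ∀ᶠ s in 𝓝[>] a, u s < v s) (hat : a < t)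
    (ht : v t ≤ u t) :
    ∃ r ∈ Ioc a t, u r = v r ∧ v' r ≤ u' r ∧ ∀ s ∈ Ioo a r, u s < v s := by
  have hc : Continuous fun s => v s - u s :=
    continuous_iff_continuousAt.2 fun s => ((hv s).sub (hu s)).continuousAt
  obtain ⟨r, hr, hr0, hbefore⟩ := exists_first_nonpos hc
    (hstart.mono fun _ => sub_pos.2) hat (sub_nonpos.2 ht)
  have hleft : ∀ᶠ s in 𝓝[<] r, 0 < v s - u s :=
    mem_of_superset (Ioo_mem_nhdsLT hr.1) hbefore
  have hzero : v r - u r = 0 :=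
    hr0.antisymm (ge_of_tendsto (hc.continuousAt.mono_left nhdsWithin_le_nhds)
      (hleft.mono fun _ => le_of_lt))
  refine ⟨r, hr, (sub_eq_zero.1 hzero).symm, ?_, fun s hs => sub_pos.1 (hbefore s hs)⟩
  refine sub_nonpos.1 (le_of_tendsto
    (hasDerivAt_iff_tendsto_slope_left_right.1 ((hv r).sub (hu r))).1 ?_)
  filter_upwards [hleft, self_mem_nhdsWithin] with s hs hsr
  rw [slope_def_field, Pi.sub_apply, Pi.sub_apply, hzero, sub_zero]
  exact div_nonpos_of_nonneg_of_nonpos hs.le (sub_nonpos.2 (le_of_lt hsr))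

/-! ### Newton's equation -/

/-- `(q, p)` are position and velocity of a global solution of Newton's equation `q̈ = -f(q)`,
written as a first-order system; `IsHSSol` is the case `f = g'`. -/
structure IsNewtonSol (f q p : ℝ → ℝ) : Prop where
  hasDerivAt_position : ∀ t, HasDerivAt q (p t) t
  hasDerivAt_velocity : ∀ t, HasDerivAt p (-f (q t)) t

/-- The phase-space vector field `(q, p) ↦ (p, -f(q))` of Newton's equation. -/
def newtonField (f : ℝ → ℝ) (z : ℝ × ℝ) : ℝ × ℝ := (z.2, -f z.1)

lemma lipschitzWith_newtonField {f : ℝ → ℝ} {K : ℝ≥0} (hf : LipschitzWith K f) :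
    LipschitzWith (max 1 K) (newtonField f) := by
  simpa using! LipschitzWith.prod_snd.prodMk (hf.comp LipschitzWith.prod_fst).neg

namespace IsNewtonSol

variable {V f q p q₁ p₁ q₂ p₂ : ℝ → ℝ} {K : ℝ≥0} {t : ℝ}

lemma hasDerivAt_prodMk (h : IsNewtonSol f q p) (t : ℝ) :
    HasDerivAt (fun s => (q s, p s)) (newtonField f (q t, p t)) t :=
  (h.hasDerivAt_position t).prodMk (h.hasDerivAt_velocity t)

lemma continuous_prodMk (h : IsNewtonSol f q p) : Continuous fun s => (q s, p s) :=
  continuous_iff_continuousAt.2 fun t => (h.hasDerivAt_prodMk t).continuousAt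

lemma zero (hf0 : f 0 = 0) : IsNewtonSol f 0 0 where
  hasDerivAt_position t := hasDerivAt_const t 0
  hasDerivAt_velocity t := by simp [hf0, hasDerivAt_zero]

lemma eq_of_apply_eq (hf : LipschitzWith K f) (h₁ : IsNewtonSol f q₁ p₁)
    (h₂ : IsNewtonSol f q₂ p₂) (hq : q₁ t = q₂ t) (hp : p₁ t = p₂ t) (s : ℝ) : q₁ s = q₂ s := by
  have heq := ODE_solution_unique_univ (v := fun _ => newtonField f) (s := fun _ => univ)
    (fun _ => (lipschitzWith_newtonField hf).lipschitzOnWith)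
    (fun t => ⟨h₁.hasDerivAt_prodMk t, mem_univ _⟩)
    (fun t => ⟨h₂.hasDerivAt_prodMk t, mem_univ _⟩) (Prod.ext hq hp)
  exact congrArg Prod.fst (congrFun heq s)

lemma dist_le (hf : LipschitzWith K f) (h₁ : IsNewtonSol f q₁ p₁) (h₂ : IsNewtonSol f q₂ p₂)
    (ht : 0 ≤ t) :
    dist (q₁ t, p₁ t) (q₂ t, p₂ t) ≤
      dist (q₁ 0, p₁ 0) (q₂ 0, p₂ 0) * exp (↑(max 1 K) * t) := by
  simpa using dist_le_of_trajectories_ODE (fun _ => lipschitzWith_newtonField hf)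
    h₁.continuous_prodMk.continuousOn (fun t _ => (h₁.hasDerivAt_prodMk t).hasDerivWithinAt)
    h₂.continuous_prodMk.continuousOn (fun t _ => (h₂.hasDerivAt_prodMk t).hasDerivWithinAt)
    le_rfl t ⟨ht, le_rfl⟩

lemma energy_eq (hV : ∀ x, HasDerivAt V (f x) x) (h : IsNewtonSol f q p) (t : ℝ) :
    p t ^ 2 / 2 + V (q t) = p 0 ^ 2 / 2 + V (q 0) := by
  have hd : ∀ s, HasDerivAt (fun s => p s ^ 2 / 2 + V (q s)) 0 s := fun s => by
    refine ((((h.hasDerivAt_velocity s).fun_pow 2).div_const 2).add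
      ((hV (q s)).comp s (h.hasDerivAt_position s))).congr_deriv ?_
    push_cast
    ring
  exact is_const_of_deriv_eq_zero (fun s => (hd s).differentiableAt) (fun s => (hd s).deriv) t 0

lemma velocity_pos (hV : ∀ x, HasDerivAt V (f x) x) (h : IsNewtonSol f q p) (hp : 0 < p 0)
    (hescape : ∀ y, V y - V (q 0) < p 0 ^ 2 / 2) (t : ℝ) : 0 < p t := by
  by_contra! ht
  obtain ⟨s, hs⟩ := mem_range_of_exists_le_of_exists_ge h.continuous_prodMk.snd
    ⟨t, ht⟩ ⟨0, hp.le⟩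
  have henergy := h.energy_eq hV s
  rw [show p s = 0 from hs] at henergy
  linarith [hescape (q s)]

lemma lower_bound_of_force_le {M : ℝ} (hM : ∀ x, f x ≤ M) (h : IsNewtonSol f q p) (ht : 0 ≤ t) :
    q 0 + p 0 * t - M / 2 * t ^ 2 ≤ q t := by
  have hp_deriv : ∀ s, HasDerivAt (fun s => p s + M * s) (-f (q s) + M) s := fun s => by
    simpa using (h.hasDerivAt_velocity s).fun_add ((hasDerivAt_id s).const_mul M)
  have hp_mono : Monotone fun s => p s + M * s :=
    monotone_of_hasDerivAt_nonneg hp_deriv fun s => le_neg_add_iff_le.2 (hM (q s))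
  have hq_deriv : ∀ s, HasDerivAt (fun s => q s - p 0 * s + M / 2 * s ^ 2)
      (p s - p 0 + M * s) s := fun s => by
    refine (((h.hasDerivAt_position s).sub ((hasDerivAt_id s).const_mul (p 0))).add
      ((hasDerivAt_pow 2 s).const_mul (M / 2))).congr_deriv ?_
    push_cast
    ring
  have hq_mono : MonotoneOn (fun s => q s - p 0 * s + M / 2 * s ^ 2) (Ici 0) := by
    refine monotoneOn_of_hasDerivWithinAt_nonneg (convex_Ici 0)
      (fun s _ => (hq_deriv s).continuousAt.continuousWithinAt)
      (fun s _ => (hq_deriv s).hasDerivWithinAt) fun s hs => ?_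
    have := hp_mono (interior_subset hs : (0 : ℝ) ≤ s)
    simp only [mul_zero, add_zero] at this
    linarith
  have := hq_mono self_mem_Ici ht ht
  simp only [mul_zero, sub_zero, ne_eq, OfNat.ofNat_ne_zero, not_false_eq_true, zero_pow,
    add_zero] at this
  linarith

lemma exists_first_crossing (hf : LipschitzWith K f) (h₁ : IsNewtonSol f q₁ p₁)
    (h₂ : IsNewtonSol f q₂ p₂) (hstart : ∀ᶠ s in 𝓝[>] 0, q₁ s < q₂ s) (ht : 0 < t)
    (hcross : q₂ t ≤ q₁ t) :
    ∃ r ∈ Ioc 0 t, q₁ r = q₂ r ∧ p₂ r < p₁ r ∧ ∀ s ∈ Ioo 0 r, q₁ s < q₂ s := by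
  obtain ⟨r, hr, hq, hp, hbefore⟩ := _root_.exists_first_crossing h₁.hasDerivAt_position
    h₂.hasDerivAt_position hstart ht hcross
  refine ⟨r, hr, hq, hp.lt_of_ne fun hp_eq => ?_, hbefore⟩
  obtain ⟨s, hs⟩ := hstart.exists
  exact hs.ne (eq_of_apply_eq hf h₁ h₂ hq hp_eq.symm s)

lemma lt_of_energy_le (hV : ∀ x, HasDerivAt V (f x) x) (hf : LipschitzWith K f)
    (h₁ : IsNewtonSol f q₁ p₁) (h₂ : IsNewtonSol f q₂ p₂) (hp₂ : ∀ s, 0 < p₂ s)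
    (henergy : p₁ 0 ^ 2 / 2 + V (q₁ 0) ≤ p₂ 0 ^ 2 / 2 + V (q₂ 0)) (hq : q₁ 0 < q₂ 0)
    (ht : 0 < t) : q₁ t < q₂ t := by
  by_contra! hcross
  have hstart : ∀ᶠ s in 𝓝[>] 0, q₁ s < q₂ s :=
    (h₁.continuous_prodMk.fst.continuousAt.eventually_lt
      h₂.continuous_prodMk.fst.continuousAt hq).filter_mono nhdsWithin_le_nhds
  obtain ⟨r, -, hqr, hpr, -⟩ := exists_first_crossing hf h₁ h₂ hstart ht hcross
  rw [← h₁.energy_eq hV r, ← h₂.energy_eq hV r, hqr] at henergy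
  nlinarith [hp₂ r]

lemma hasDerivAt_wronskian (h₁ : IsNewtonSol f q₁ p₁) (h₂ : IsNewtonSol f q₂ p₂) (t : ℝ) :
    HasDerivAt (fun s => q₁ s * p₂ s - q₂ s * p₁ s)
      (q₂ t * f (q₁ t) - q₁ t * f (q₂ t)) t := by
  refine (((h₁.hasDerivAt_position t).mul (h₂.hasDerivAt_velocity t)).sub
    ((h₂.hasDerivAt_position t).mul (h₁.hasDerivAt_velocity t))).congr_deriv ?_
  ring

lemma wronskian_nonneg (hanti : AntitoneOn (fun x => f x / x) (Ioi 0))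
    (h₁ : IsNewtonSol f q₁ p₁) (h₂ : IsNewtonSol f q₂ p₂) (hq₁ : q₁ 0 = 0) (hq₂ : q₂ 0 = 0)
    (ht : 0 ≤ t) (hpos : ∀ s ∈ Ioo 0 t, 0 < q₁ s) (hle : ∀ s ∈ Ioo 0 t, q₁ s ≤ q₂ s) :
    0 ≤ q₁ t * p₂ t - q₂ t * p₁ t := by
  have hmono : MonotoneOn (fun s => q₁ s * p₂ s - q₂ s * p₁ s) (Icc 0 t) := by
    refine monotoneOn_of_hasDerivWithinAt_nonneg (convex_Icc 0 t)
      (fun s _ => (h₁.hasDerivAt_wronskian h₂ s).continuousAt.continuousWithinAt)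
      (fun s _ => (h₁.hasDerivAt_wronskian h₂ s).hasDerivWithinAt) fun s hs => ?_
    rw [interior_Icc] at hs
    have hs₁ := hpos s hs
    have hs₂ := hs₁.trans_le (hle s hs)
    have hslope : f (q₂ s) / q₂ s ≤ f (q₁ s) / q₁ s := hanti hs₁ hs₂ (hle s hs)
    rw [div_le_div_iff₀ hs₂ hs₁] at hslope
    linarith
  simpa [hq₁, hq₂] using hmono (left_mem_Icc.2 ht) (right_mem_Icc.2 ht) ht

lemma lt_of_velocity_lt (hf : LipschitzWith K f) (hanti : AntitoneOn (fun x => f x / x) (Ioi 0))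
    (h₁ : IsNewtonSol f q₁ p₁) (h₂ : IsNewtonSol f q₂ p₂) (hq₁ : q₁ 0 = 0) (hq₂ : q₂ 0 = 0)
    (hp : p₁ 0 < p₂ 0) (ht : 0 < t) (hpos : ∀ s ∈ Ioc 0 t, 0 < q₁ s) : q₁ t < q₂ t := by
  by_contra! hcross
  have hstart : ∀ᶠ s in 𝓝[>] 0, q₁ s < q₂ s :=
    eventually_nhdsGT_lt_of_hasDerivAt (h₁.hasDerivAt_position 0) (h₂.hasDerivAt_position 0)
      (hq₁.trans hq₂.symm) hp
  obtain ⟨r, hr, hqr, hpr, hbefore⟩ := exists_first_crossing hf h₁ h₂ hstart ht hcross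
  have hW := wronskian_nonneg hanti h₁ h₂ hq₁ hq₂ hr.1.le
    (fun s hs => hpos s ⟨hs.1, hs.2.le.trans hr.2⟩) (fun s hs => (hbefore s hs).le)
  rw [← hqr, ← mul_sub] at hW
  exact hW.not_gt (mul_neg_of_pos_of_neg (hpos r hr) (sub_neg.2 hpr))

end IsNewtonSol

lemma force_le_of_forall_sub_lt {V f : ℝ → ℝ} {K : ℝ≥0} {C : ℝ}
    (hV : ∀ x, HasDerivAt V (f x) x) (hf : LipschitzWith K f) (hosc : ∀ x y, V y - V x < C)
    (x : ℝ) : f x ≤ C + K := by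
  obtain ⟨y, hy, hslope⟩ := exists_hasDerivAt_eq_slope V f (lt_add_one x)
    (fun z _ => (hV z).continuousAt.continuousWithinAt) (fun z _ => hV z)
  rw [add_sub_cancel_left, div_one] at hslope
  have hdist : dist x y ≤ 1 := by
    rw [dist_comm, Real.dist_eq, abs_of_pos (sub_pos.2 hy.1)]
    linarith [hy.2]
  have hlip : f x - f y ≤ K := calc
    f x - f y ≤ dist (f x) (f y) := le_abs_self _
    _ ≤ K * dist x y := hf.dist_le_mul x y
    _ ≤ K := mul_le_of_le_one_right K.2 hdist
  linarith [hosc x (x + 1)]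

/-! ### The curve of initial data -/

/-- The set `([0, ∞) × {c}) ∪ ({0} × (0, c])` of initial data; `Dset` is the case `c = 2`. -/
def initialSet (c : ℝ) : Set (ℝ × ℝ) := (Ici 0 ×ˢ {c}) ∪ ({0} ×ˢ Ioc 0 c)

/-- Parametrization of `initialSet c` by `l > 0`: up the velocity axis until `(0, c)`, reached at
`l = c`, and then along the horizontal line `p = c`. -/
noncomputable def initialCurve (c l : ℝ) : ℝ × ℝ := (max (l - c) 0, min l c)

section initialCurve

variable {c l : ℝ}

lemma initialCurve_of_le (h : l ≤ c) : initialCurve c l = (0, l) := by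
  simp [initialCurve, h]

lemma initialCurve_of_ge (h : c ≤ l) : initialCurve c l = (l - c, c) := by
  simp [initialCurve, h]

lemma continuous_initialCurve (c : ℝ) : Continuous (initialCurve c) := by
  unfold initialCurve
  fun_prop

lemma image_initialCurve (hc : 0 < c) : initialCurve c '' Ioi 0 = initialSet c := by
  ext ⟨a, b⟩
  constructor
  · rintro ⟨l, hl, hab⟩
    rw [← hab]
    rcases le_total l c with hlc | hcl
    · exact initialCurve_of_le hlc ▸ Or.inr ⟨rfl, hl, hlc⟩
    · exact initialCurve_of_ge hcl ▸ Or.inl ⟨sub_nonneg.2 hcl, rfl⟩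
  · rintro (⟨ha, rfl : b = c⟩ | ⟨rfl : a = 0, hb, hbc⟩)
    · exact ⟨a + b, add_pos_of_nonneg_of_pos ha hc, by
        rw [initialCurve_of_ge (le_add_of_nonneg_left ha), add_sub_cancel_right]⟩
    · exact ⟨b, hb, initialCurve_of_le hbc⟩

end initialCurve

/-! ### Newton flows -/

/-- `F t a b` is the position and velocity at time `t` of the solution of Newton's equation
`q̈ = -f(q)` with initial datum `(a, b)`; `IsHSFlow` is the case `f = g'`. -/
def IsNewtonFlow (f : ℝ → ℝ) (F : ℝ → ℝ → ℝ → ℝ × ℝ) : Prop :=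
  ∀ a b, IsNewtonSol f (fun t => (F t a b).1) (fun t => (F t a b).2) ∧ F 0 a b = (a, b)

/-- The position at time `t` of the orbit issued from the point `initialCurve c l`. -/
noncomputable def curvePosition (F : ℝ → ℝ → ℝ → ℝ × ℝ) (c t l : ℝ) : ℝ :=
  (F t (initialCurve c l).1 (initialCurve c l).2).1

/-- Pairs `(l, s)` such that the orbit issued from `(0, l)` is in `q ≤ 0` at time `s ≤ t`. The
condition `l ≤ M / 2 * s`, automatic at positive times under a force bounded by `M`, excludes the
trivial pairs `(l, 0)` with `l > 0`. -/
def returnSet (F : ℝ → ℝ → ℝ → ℝ × ℝ) (c M t : ℝ) : Set (ℝ × ℝ) :=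
  {z ∈ Icc 0 c ×ˢ Icc 0 t | curvePosition F c z.2 z.1 ≤ 0 ∧ z.1 ≤ M / 2 * z.2}

section curvePosition

variable {F : ℝ → ℝ → ℝ → ℝ × ℝ} {c l : ℝ}

lemma curvePosition_of_le (h : l ≤ c) (t : ℝ) : curvePosition F c t l = (F t 0 l).1 := by
  rw [curvePosition, initialCurve_of_le h]

lemma curvePosition_of_ge (h : c ≤ l) (t : ℝ) : curvePosition F c t l = (F t (l - c) c).1 := by
  rw [curvePosition, initialCurve_of_ge h]

end curvePosition

namespace IsNewtonFlow

variable {V f : ℝ → ℝ} {F : ℝ → ℝ → ℝ → ℝ × ℝ} {K : ℝ≥0} {M c l m t x : ℝ}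

lemma isNewtonSol (hF : IsNewtonFlow f F) (a b : ℝ) :
    IsNewtonSol f (fun t => (F t a b).1) (fun t => (F t a b).2) :=
  (hF a b).1

lemma apply_zero (hF : IsNewtonFlow f F) (a b : ℝ) : F 0 a b = (a, b) :=
  (hF a b).2

lemma continuousOn_uncurry (hF : IsNewtonFlow f F) (hf : LipschitzWith K f) (T : ℝ) :
    ContinuousOn (fun z : (ℝ × ℝ) × ℝ => F z.2 z.1.1 z.1.2) (univ ×ˢ Icc 0 T) := by
  refine continuousOn_prod_of_continuousOn_lipschitzOnWith _ (exp (↑(max 1 K) * T)).toNNReal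
    (fun a _ => (hF.isNewtonSol a.1 a.2).continuous_prodMk.continuousOn) fun t ht => ?_
  refine LipschitzOnWith.of_dist_le_mul fun a _ b _ => ?_
  rw [Real.coe_toNNReal _ (exp_pos _).le]
  calc dist (F t a.1 a.2) (F t b.1 b.2)
    _ ≤ dist a b * exp (↑(max 1 K) * t) := by
      simpa [hF.apply_zero] using
        (hF.isNewtonSol a.1 a.2).dist_le hf (hF.isNewtonSol b.1 b.2) ht.1
    _ ≤ exp (↑(max 1 K) * T) * dist a b := by
      rw [mul_comm]
      gcongr
      exact ht.2

lemma continuousOn_curvePosition_uncurry (hF : IsNewtonFlow f F) (hf : LipschitzWith K f)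
    (c T : ℝ) :
    ContinuousOn (fun z : ℝ × ℝ => curvePosition F c z.2 z.1) (univ ×ˢ Icc 0 T) :=
  continuous_fst.comp_continuousOn <| (hF.continuousOn_uncurry hf T).comp
    (((continuous_initialCurve c).comp continuous_fst).prodMk continuous_snd).continuousOn
    fun _ hz => ⟨mem_univ _, hz.2⟩

lemma continuous_curvePosition (hF : IsNewtonFlow f F) (hf : LipschitzWith K f) (c : ℝ)
    (ht : 0 ≤ t) : Continuous (curvePosition F c t) :=
  continuousOn_univ.1 <| (hF.continuousOn_curvePosition_uncurry hf c t).comp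
    (f := fun l => (l, t)) (by fun_prop) fun _ _ => ⟨mem_univ _, ht, le_rfl⟩

lemma curvePosition_zero (hF : IsNewtonFlow f F) (hf : LipschitzWith K f) (hf0 : f 0 = 0)
    (hc : 0 ≤ c) (t : ℝ) : curvePosition F c t 0 = 0 := by
  rw [curvePosition_of_le hc]
  exact (hF.isNewtonSol 0 0).eq_of_apply_eq (t := 0) hf (.zero hf0)
    (by simp [hF.apply_zero]) (by simp [hF.apply_zero]) t

lemma velocity_pos (hF : IsNewtonFlow f F) (hV : ∀ x, HasDerivAt V (f x) x) (hc : 0 < c)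
    (hosc : ∀ x y, V y - V x < c ^ 2 / 2) (a t : ℝ) : 0 < (F t a c).2 :=
  (hF.isNewtonSol a c).velocity_pos hV (by simpa [hF.apply_zero])
    (by simpa [hF.apply_zero] using hosc a) t

lemma sub_lt_curvePosition (hF : IsNewtonFlow f F) (hV : ∀ x, HasDerivAt V (f x) x) (hc : 0 < c)
    (hosc : ∀ x y, V y - V x < c ^ 2 / 2) (hcl : c ≤ l) (ht : 0 < t) :
    l - c < curvePosition F c t l := by
  rw [curvePosition_of_ge hcl]
  have hmono := strictMono_of_hasDerivAt_pos (hF.isNewtonSol (l - c) c).hasDerivAt_position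
    (hF.velocity_pos hV hc hosc (l - c))
  simpa [hF.apply_zero] using hmono ht

lemma strictMonoOn_curvePosition (hF : IsNewtonFlow f F) (hV : ∀ x, HasDerivAt V (f x) x)
    (hf : LipschitzWith K f) (hmono : MonotoneOn V (Ici 0))
    (hanti : AntitoneOn (fun x => f x / x) (Ioi 0)) (hc : 0 < c)
    (hosc : ∀ x y, V y - V x < c ^ 2 / 2) (ht : 0 < t) :
    StrictMonoOn (curvePosition F c t) {l | 0 < l ∧ ∀ s ∈ Ioc 0 t, 0 < curvePosition F c s l} := by
  rintro l ⟨hl, hpos⟩ m - hlm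
  rcases le_or_gt m c with hmc | hcm
  · simp only [curvePosition_of_le (hlm.le.trans hmc)] at hpos ⊢
    rw [curvePosition_of_le hmc]
    exact IsNewtonSol.lt_of_velocity_lt hf hanti (hF.isNewtonSol 0 l) (hF.isNewtonSol 0 m)
      (by simp [hF.apply_zero]) (by simp [hF.apply_zero]) (by simpa [hF.apply_zero]) ht hpos
  · have hstart_nonneg : 0 ≤ (initialCurve c l).1 := le_max_right _ _
    have hstart_lt : (initialCurve c l).1 < m - c :=
      max_lt (sub_lt_sub_right hlm c) (sub_pos.2 hcm)
    have hvelocity_nonneg : 0 ≤ (initialCurve c l).2 := le_min hl.le hc.le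
    have hvelocity_le : (initialCurve c l).2 ≤ c := min_le_right l c
    rw [curvePosition_of_ge hcm.le]
    refine IsNewtonSol.lt_of_energy_le hV hf (hF.isNewtonSol _ _) (hF.isNewtonSol _ _)
      (hF.velocity_pos hV hc hosc _) ?_ ?_ ht <;> simp only [hF.apply_zero]
    · gcongr
      exact hmono hstart_nonneg (sub_nonneg.2 hcm.le) hstart_lt.le
    · exact hstart_lt

lemma isCompact_returnSet (hF : IsNewtonFlow f F) (hf : LipschitzWith K f) (c M t : ℝ) :
    IsCompact (returnSet F c M t) := by
  have hcont : ContinuousOn (fun z : ℝ × ℝ => curvePosition F c z.2 z.1) (Icc 0 c ×ˢ Icc 0 t) :=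
    (hF.continuousOn_curvePosition_uncurry hf c t).mono (prod_mono (subset_univ _) le_rfl)
  have hclosed : IsClosed {z : ℝ × ℝ | z.1 ≤ M / 2 * z.2} :=
    isClosed_le continuous_fst (continuous_const.mul continuous_snd)
  have hrect : IsClosed (Icc 0 c ×ˢ Icc 0 t) := isClosed_Icc.prod isClosed_Icc
  have hreturn := hcont.preimage_isClosed_of_isClosed hrect (isClosed_Iic (a := 0))
  have h := ((isCompact_Icc.prod isCompact_Icc).of_isClosed_subset hreturn
    inter_subset_left).inter_right hclosed
  rwa [inter_assoc] at h

lemma le_of_curvePosition_nonpos (hF : IsNewtonFlow f F) (hM : ∀ x, f x ≤ M) (hlc : l ≤ c)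
    (ht : 0 < t) (h : curvePosition F c t l ≤ 0) : l ≤ M / 2 * t := by
  have hlower := (hF.isNewtonSol 0 l).lower_bound_of_force_le hM ht.le
  simp only [hF.apply_zero, ← curvePosition_of_le hlc] at hlower
  refine le_of_mul_le_mul_right ?_ ht
  linarith

lemma exists_last_return (hF : IsNewtonFlow f F) (hV : ∀ x, HasDerivAt V (f x) x)
    (hf : LipschitzWith K f) (hf0 : f 0 = 0) (hM : ∀ x, f x ≤ M) (hc : 0 < c)
    (hosc : ∀ x y, V y - V x < c ^ 2 / 2) (ht : 0 ≤ t) :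
    ∃ z ∈ returnSet F c M t, ∀ l > z.1, ∀ r ∈ Ioc 0 t, 0 < curvePosition F c r l := by
  have hzero : (0, 0) ∈ returnSet F c M t :=
    ⟨⟨⟨le_rfl, hc.le⟩, le_rfl, ht⟩, (hF.curvePosition_zero hf hf0 hc.le 0).le, by simp⟩
  obtain ⟨z, hz, hmax⟩ := (hF.isCompact_returnSet hf c M t).exists_isMaxOn ⟨_, hzero⟩
    continuous_fst.continuousOn
  refine ⟨z, hz, fun l hl r hr => ?_⟩
  by_contra! hreturn
  rcases le_total l c with hlc | hcl
  · have hmem : (l, r) ∈ returnSet F c M t :=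
      ⟨⟨⟨hz.1.1.1.trans (le_of_lt hl), hlc⟩, hr.1.le, hr.2⟩, hreturn,
        hF.le_of_curvePosition_nonpos hM hlc hr.1 hreturn⟩
    exact (hmax hmem).not_gt hl
  · linarith [hF.sub_lt_curvePosition hV hc hosc hcl hr.1]

lemma eq_of_curvePosition_eq_zero (hF : IsNewtonFlow f F) (hV : ∀ x, HasDerivAt V (f x) x)
    {s : ℝ} (hm : m ≠ 0) (hmc : m ≤ c) (hs : s ∈ Ioc 0 t) (hzero : curvePosition F c s m = 0)
    (hnonneg : ∀ r ∈ Ioc 0 t, 0 ≤ curvePosition F c r m) : s = t := by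
  by_contra hst
  simp only [curvePosition_of_le hmc] at hzero hnonneg
  have hmin : IsLocalMin (fun r => (F r 0 m).1) s := by
    filter_upwards [Ioo_mem_nhds hs.1 (hs.2.lt_of_ne hst)] with r hr
    exact hzero.le.trans (hnonneg r ⟨hr.1, hr.2.le⟩)
  have hvel := hmin.hasDerivAt_eq_zero ((hF.isNewtonSol 0 m).hasDerivAt_position s)
  have henergy := (hF.isNewtonSol 0 m).energy_eq hV s
  simp only [hvel, hzero, hF.apply_zero] at henergy
  exact hm (pow_eq_zero_iff two_ne_zero |>.1 (by linarith))

lemma exists_critical_parameter (hF : IsNewtonFlow f F) (hV : ∀ x, HasDerivAt V (f x) x)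
    (hf : LipschitzWith K f) (hf0 : f 0 = 0) (hc : 0 < c)
    (hosc : ∀ x y, V y - V x < c ^ 2 / 2) (ht : 0 < t) :
    ∃ m ∈ Icc 0 c, curvePosition F c t m ≤ 0 ∧
      ∀ l > m, ∀ r ∈ Ioc 0 t, 0 < curvePosition F c r l := by
  obtain ⟨⟨m, s⟩, ⟨⟨hm, hs⟩, hreturn, hms⟩, habove⟩ := hF.exists_last_return hV hf hf0
    (force_le_of_forall_sub_lt hV hf hosc) hc hosc ht.le
  refine ⟨m, hm, ?_, habove⟩
  rcases hm.1.eq_or_lt with rfl | hm_pos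
  · exact (hF.curvePosition_zero hf hf0 hc.le t).le
  have hs_pos : 0 < s := hs.1.lt_of_ne fun h => by
    rw [← h, mul_zero] at hms
    exact hms.not_gt hm_pos
  have hnonneg : ∀ r ∈ Ioc 0 t, 0 ≤ curvePosition F c r m := fun r hr => by
    have hright : Tendsto (curvePosition F c r) (𝓝[>] m) (𝓝 (curvePosition F c r m)) :=
      (hF.continuous_curvePosition hf c hr.1.le).continuousAt.mono_left nhdsWithin_le_nhds
    exact ge_of_tendsto hright
      (eventually_mem_nhdsWithin.mono fun l hl => (habove l hl r hr).le)
  have hst := hF.eq_of_curvePosition_eq_zero hV hm_pos.ne' hm.2 ⟨hs_pos, hs.2⟩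
    (hreturn.antisymm (hnonneg s ⟨hs_pos, hs.2⟩)) hnonneg
  exact hst ▸ hreturn

lemma exists_curvePosition_eq (hF : IsNewtonFlow f F) (hV : ∀ x, HasDerivAt V (f x) x)
    (hf : LipschitzWith K f) (hf0 : f 0 = 0) (hc : 0 < c)
    (hosc : ∀ x y, V y - V x < c ^ 2 / 2) (ht : 0 < t) (hx : 0 < x) :
    ∃ l > 0, curvePosition F c t l = x ∧ ∀ s ∈ Ioc 0 t, 0 < curvePosition F c s l := by
  obtain ⟨m, hm, hreturn, habove⟩ := hF.exists_critical_parameter hV hf hf0 hc hosc ht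
  have hfar : x ≤ curvePosition F c t (x + c) := by
    simpa using (hF.sub_lt_curvePosition hV hc hosc (le_add_of_nonneg_left hx.le) ht).le
  obtain ⟨l, hl, hlx⟩ := intermediate_value_Icc (hm.2.trans (le_add_of_nonneg_left hx.le))
    (hF.continuous_curvePosition hf c ht.le).continuousOn ⟨hreturn.trans hx.le, hfar⟩
  have hml : m < l := hl.1.lt_of_ne fun h => hx.not_ge (hlx ▸ h ▸ hreturn)
  exact ⟨l, hm.1.trans_lt hml, hlx, habove l hml⟩

end IsNewtonFlow

theorem stmt_8_general {V f : ℝ → ℝ} {K : ℝ≥0} {c : ℝ} (hV : ∀ x, HasDerivAt V (f x) x)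
    (hf : LipschitzWith K f) (hf0 : f 0 = 0) (hmono : MonotoneOn V (Ici 0))
    (hanti : AntitoneOn (fun x => f x / x) (Ioi 0)) (hc : 0 < c)
    (hosc : ∀ x y, V y - V x < c ^ 2 / 2) (F : ℝ → ℝ → ℝ → ℝ × ℝ) (hF : IsNewtonFlow f F) :
    (∀ t x : ℝ, 0 < t → 0 < x →
      ∃! qp : ℝ × ℝ, qp ∈ initialSet c ∧ (F t qp.1 qp.2).1 = x ∧
        ∀ s ∈ Ioo (0 : ℝ) t, 0 < (F s qp.1 qp.2).1) ∧
    ∃ Δ : ℝ → ℝ → ℝ × ℝ, ∀ t x : ℝ, 0 < t → 0 < x →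
      Δ t x ∈ initialSet c ∧ (F t (Δ t x).1 (Δ t x).2).1 = x ∧
        ∀ s ∈ Ioo (0 : ℝ) t, 0 < (F s (Δ t x).1 (Δ t x).2).1 := by
  have hunique : ∀ t x : ℝ, 0 < t → 0 < x →
      ∃! qp : ℝ × ℝ, qp ∈ initialSet c ∧ (F t qp.1 qp.2).1 = x ∧
        ∀ s ∈ Ioo (0 : ℝ) t, 0 < (F s qp.1 qp.2).1 := by
    intro t x ht hx
    rw [← image_initialCurve hc]
    obtain ⟨l, hl, hlx, hlpos⟩ := hF.exists_curvePosition_eq hV hf hf0 hc hosc ht hx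
    refine ⟨initialCurve c l, ⟨mem_image_of_mem _ hl, hlx, fun s hs => hlpos s ⟨hs.1, hs.2.le⟩⟩, ?_⟩
    rintro _ ⟨⟨m, hm, rfl⟩, hmx : curvePosition F c t m = x, hmpos⟩
    have hmpos' : ∀ s ∈ Ioc 0 t, 0 < curvePosition F c s m := fun s hs =>
      hs.2.eq_or_lt.elim (fun h => h ▸ hmx ▸ hx) fun h => hmpos s ⟨hs.1, h⟩
    have hinj := (hF.strictMonoOn_curvePosition hV hf hmono hanti hc hosc ht).injOn
    exact congrArg _ (hinj ⟨hm, hmpos'⟩ ⟨hl, hlpos⟩ (hmx.trans hlx.symm))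
  refine ⟨hunique, ?_⟩
  choose! Δ hΔ using fun t x ht hx => (hunique t x ht hx).exists
  exact ⟨Δ, hΔ⟩

/-! ### The potential `g` -/

/-- The truncated parabola `(1 - x²)⁺`; it removes the case distinction from `g = 1 - bump ^ 4` and
`g' = 8 x bump ^ 3`. -/
noncomputable def bump (x : ℝ) : ℝ := max (1 - x ^ 2) 0

lemma bump_nonneg (x : ℝ) : 0 ≤ bump x := le_max_right _ _

lemma bump_le_one (x : ℝ) : bump x ≤ 1 :=
  max_le (sub_le_self 1 (sq_nonneg x)) zero_le_one

lemma antitoneOn_bump : AntitoneOn bump (Ici 0) := fun _ hx _ _ hxy =>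
  max_le_max_right 0 (sub_le_sub_left (pow_le_pow_left₀ hx hxy 2) 1)

lemma bump_of_abs_le {x : ℝ} (h : |x| ≤ 1) : bump x = 1 - x ^ 2 :=
  max_eq_left (sub_nonneg.2 ((sq_le_one_iff_abs_le_one x).2 h))

lemma bump_of_one_lt_abs {x : ℝ} (h : 1 < |x|) : bump x = 0 :=
  max_eq_right (sub_nonpos.2 ((one_lt_sq_iff_one_lt_abs x).2 h).le)

lemma g_eq_bump (x : ℝ) : g x = 1 - bump x ^ 4 := by
  unfold g
  split_ifs with h
  · rw [bump_of_abs_le h]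
  · simp [bump_of_one_lt_abs (not_le.1 h)]

lemma g'_eq_bump (x : ℝ) : g' x = 8 * x * bump x ^ 3 := by
  unfold g'
  split_ifs with h
  · rw [bump_of_abs_le h]
  · simp [bump_of_one_lt_abs (not_le.1 h)]

lemma hasDerivAt_max_zero_pow (n : ℕ) (u : ℝ) :
    HasDerivAt (fun u : ℝ => max u 0 ^ (n + 2)) ((n + 2) * max u 0 ^ (n + 1)) u := by
  refine hasDerivAt_of_hasDerivAt_of_ne' (x := 0)
    (g := fun u : ℝ => (n + 2 : ℝ) * max u 0 ^ (n + 1)) (fun y hy => ?_)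
    (by fun_prop) (by fun_prop) u
  rcases hy.lt_or_gt with hneg | hpos
  · refine ((hasDerivAt_const y (0 : ℝ)).congr_of_eventuallyEq ?_).congr_deriv
      (by simp [hneg.le])
    filter_upwards [Iio_mem_nhds hneg] with z hz
    simp [le_of_lt (mem_Iio.1 hz)]
  · refine ((hasDerivAt_pow (n + 2) y).congr_of_eventuallyEq ?_).congr_deriv
      (by simp [hpos.le])
    filter_upwards [Ioi_mem_nhds hpos] with z hz
    simp [le_of_lt (mem_Ioi.1 hz)]

lemma hasDerivAt_bump_pow (n : ℕ) (x : ℝ) :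
    HasDerivAt (fun x => bump x ^ (n + 2)) (-(2 * (n + 2) * x * bump x ^ (n + 1))) x := by
  have hinner : HasDerivAt (fun x : ℝ => 1 - x ^ 2) (-(2 * x)) x := by
    simpa using (hasDerivAt_pow 2 x).const_sub 1
  refine ((hasDerivAt_max_zero_pow n (1 - x ^ 2)).comp x hinner).congr_deriv ?_
  rw [bump]
  ring

lemma hasDerivAt_g (x : ℝ) : HasDerivAt g (g' x) x := by
  rw [funext g_eq_bump, g'_eq_bump]
  refine ((hasDerivAt_bump_pow 2 x).const_sub 1).congr_deriv ?_
  push_cast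
  ring

lemma hasDerivAt_g' (x : ℝ) :
    HasDerivAt g' (8 * bump x ^ 3 - 48 * x ^ 2 * bump x ^ 2) x := by
  rw [funext g'_eq_bump]
  refine (((hasDerivAt_id x).const_mul 8).mul (hasDerivAt_bump_pow 1 x)).congr_deriv ?_
  simp only [id_eq]
  push_cast
  ring

lemma sq_mul_bump_sq_le_one (x : ℝ) : x ^ 2 * bump x ^ 2 ≤ 1 := by
  rcases le_or_gt |x| 1 with h | h
  · exact mul_le_one₀ ((sq_le_one_iff_abs_le_one x).2 h) (sq_nonneg _)
      (pow_le_one₀ (bump_nonneg x) (bump_le_one x))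
  · simp [bump_of_one_lt_abs h]

lemma lipschitzWith_g' : LipschitzWith 48 g' := by
  refine lipschitzWith_of_nnnorm_deriv_le (fun x => (hasDerivAt_g' x).differentiableAt) fun x => ?_
  rw [(hasDerivAt_g' x).deriv, ← NNReal.coe_le_coe, coe_nnnorm, Real.norm_eq_abs, abs_le]
  have hcube_nonneg := pow_nonneg (bump_nonneg x) 3
  have hcube_le := pow_le_one₀ (n := 3) (bump_nonneg x) (bump_le_one x)
  have hprod_nonneg := mul_nonneg (sq_nonneg x) (sq_nonneg (bump x))
  have hprod_le := sq_mul_bump_sq_le_one x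
  push_cast
  constructor <;> linarith

lemma monotoneOn_g : MonotoneOn g (Ici 0) := fun x hx y hy hxy => by
  rw [g_eq_bump, g_eq_bump]
  exact sub_le_sub_left (pow_le_pow_left₀ (bump_nonneg y) (antitoneOn_bump hx hy hxy) 4) 1

lemma antitoneOn_g'_div : AntitoneOn (fun x => g' x / x) (Ioi 0) := by
  have hanti : AntitoneOn (fun x => 8 * bump x ^ 3) (Ioi 0) := fun x hx y hy hxy =>
    mul_le_mul_of_nonneg_left (pow_le_pow_left₀ (bump_nonneg y)
      (antitoneOn_bump (Ioi_subset_Ici_self hx) (Ioi_subset_Ici_self hy) hxy) 3) (by norm_num)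
  refine hanti.congr fun x hx => ?_
  rw [g'_eq_bump]
  field_simp [(mem_Ioi.1 hx).ne']

lemma g_sub_g_le_one (x y : ℝ) : g y - g x ≤ 1 := by
  rw [g_eq_bump, g_eq_bump]
  linarith [pow_nonneg (bump_nonneg y) 4, pow_le_one₀ (n := 4) (bump_nonneg x) (bump_le_one x)]

lemma IsHSFlow.isNewtonFlow {F : ℝ → ℝ → ℝ → ℝ × ℝ} (hF : IsHSFlow F) : IsNewtonFlow g' F :=
  fun a b => ⟨⟨(hF a b).1.1, (hF a b).1.2⟩, (hF a b).2⟩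

/-- Lemma ce5, existence and uniqueness: for every `(t, x) ∈ (0,∞)²` there is a unique
`(q₀, p₀) ∈ ([0,∞) × {2}) ∪ ({0} × (0,2])` with `F_q(t, q₀, p₀) = x` and
`F_q(s, q₀, p₀) > 0` for all `s ∈ (0, t)`; this defines the map `Δ`. -/
theorem stmt_8 (F : ℝ → ℝ → ℝ → ℝ × ℝ) (hF : IsHSFlow F) :
    (∀ t x : ℝ, 0 < t → 0 < x →
      ∃! qp : ℝ × ℝ, qp ∈ Dset ∧ (F t qp.1 qp.2).1 = x ∧
        ∀ s ∈ Ioo (0:ℝ) t, 0 < (F s qp.1 qp.2).1) ∧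
    ∃ Δ : ℝ → ℝ → ℝ × ℝ, IsDeltaMap F Δ := by
  exact stmt_8_general hasDerivAt_g lipschitzWith_g' (by simp [g']) monotoneOn_g antitoneOn_g'_div
    two_pos (fun x y => (g_sub_g_le_one x y).trans_lt (by norm_num)) F hF.isNewtonFlow
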